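/- Let A be a Banach algebra, I a closed two-sided ideal of A, and n ∈ ℕ. If A is (n+2)-I-weakly amenable, then A is n-I-weakly amenable. -/

import Mathlib

/- ## Core definitions: Banach bimodules over (non-unital) complex Banach algebras,
iterated dual modules, derivations, ideal amenability, and Arens extensions. -/

noncomputable section

open ContinuousLinearMap

universe u

/-- The topological dual of a complex normed space. -/
abbrev Dl (X : Type u) [SeminormedAddCommGroup X] [NormedSpace ℂ X] : Type u := X →L[ℂ] ℂ

/-- The canonical embedding of a normed space into its double dual. -/
def inclDD (X : Type u) [SeminormedAddCommGroup X] [NormedSpace ℂ X] : X →L[ℂ] Dl (Dl X) :=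
  ContinuousLinearMap.apply ℂ ℂ

@[simp] lemma inclDD_apply {X : Type u} [SeminormedAddCommGroup X] [NormedSpace ℂ X]
    (x : X) (f : Dl X) : inclDD X x f = f x := rfl

/-- A (bounded) Banach bimodule structure of a complex Banach algebra `A`
on a complex Banach space `X`:  `l a x = a • x` and `r a x = x • a`. -/
structure Bimodule (A : Type u) [NonUnitalNormedRing A] [NormedSpace ℂ A]
    [SMulCommClass ℂ A A] [IsScalarTower ℂ A A]
    (X : Type u) [NormedAddCommGroup X] [NormedSpace ℂ X] : Type u where
  l : A →L[ℂ] X →L[ℂ] X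
  r : A →L[ℂ] X →L[ℂ] X
  l_mul : ∀ a b x, l (a * b) x = l a (l b x)
  r_mul : ∀ a b x, r (a * b) x = r b (r a x)
  lr : ∀ a b x, l a (r b x) = r b (l a x)

variable {A : Type u} [NonUnitalNormedRing A] [NormedSpace ℂ A]
  [SMulCommClass ℂ A A] [IsScalarTower ℂ A A]

/-- The dual module of a Banach bimodule: `(a·f)(x) = f(x·a)` and `(f·a)(x) = f(a·x)`. -/
def Bimodule.dualMod {X : Type u} [NormedAddCommGroup X] [NormedSpace ℂ X]
    (M : Bimodule A X) : Bimodule A (Dl X) where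
  l := ((ContinuousLinearMap.compL ℂ X X ℂ).flip).comp M.r
  r := ((ContinuousLinearMap.compL ℂ X X ℂ).flip).comp M.l
  l_mul := fun a b f => by
    ext x
    simp [M.r_mul]
  r_mul := fun a b f => by
    ext x
    simp [M.l_mul]
  lr := fun a b f => by
    ext x
    simp [M.lr]

@[simp] lemma Bimodule.dualMod_l_apply {X : Type u} [NormedAddCommGroup X] [NormedSpace ℂ X]
    (M : Bimodule A X) (a : A) (f : Dl X) (x : X) :
    M.dualMod.l a f x = f (M.r a x) := by
  simp [Bimodule.dualMod]

@[simp] lemma Bimodule.dualMod_r_apply {X : Type u} [NormedAddCommGroup X] [NormedSpace ℂ X]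
    (M : Bimodule A X) (a : A) (f : Dl X) (x : X) :
    M.dualMod.r a f x = f (M.l a x) := by
  simp [Bimodule.dualMod]

/-- A Banach `A`-bimodule, bundled with its underlying space. -/
structure BMod (A : Type u) [NonUnitalNormedRing A] [NormedSpace ℂ A]
    [SMulCommClass ℂ A A] [IsScalarTower ℂ A A] : Type (u + 1) where
  X : Type u
  [xGroup : NormedAddCommGroup X]
  [xSpace : NormedSpace ℂ X]
  act : Bimodule A X

attribute [instance] BMod.xGroup BMod.xSpace

/-- The dual of a bundled Banach bimodule. -/
def BMod.dualObj (M : BMod A) : BMod A :=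
  ⟨Dl M.X, M.act.dualMod⟩

/-- The `n`-th dual of a bundled Banach bimodule (`iter 0 = M`). -/
def BMod.iter (M : BMod A) : ℕ → BMod A
  | 0 => M
  | n + 1 => (M.iter n).dualObj

/-- A bounded derivation from `A` into the Banach `A`-bimodule `M`. -/
def IsDerivation (M : BMod A) (D : A →L[ℂ] M.X) : Prop :=
  ∀ a b : A, D (a * b) = M.act.l a (D b) + M.act.r b (D a)

/-- An inner derivation.  -/
def IsInner (M : BMod A) (D : A →L[ℂ] M.X) : Prop :=
  ∃ x : M.X, ∀ a : A, D a = M.act.l a x - M.act.r a x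

/-- `H¹(A, M) = {0}` : every bounded derivation into `M` is inner. -/
def H1Zero (M : BMod A) : Prop :=
  ∀ D : A →L[ℂ] M.X, IsDerivation M D → IsInner M D

/-- A closed two-sided ideal of the Banach algebra `A`. -/
structure ClosedIdeal (A : Type u) [NonUnitalNormedRing A] [NormedSpace ℂ A]
    [SMulCommClass ℂ A A] [IsScalarTower ℂ A A] : Type u where
  car : Submodule ℂ A
  isClosed : IsClosed (car : Set A)
  mul_mem_left : ∀ (a x : A), x ∈ car → a * x ∈ car
  mul_mem_right : ∀ (a x : A), x ∈ car → x * a ∈ car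

namespace ClosedIdeal

variable (I : ClosedIdeal A)

/-- Left multiplication action of `A` on a closed two-sided ideal. -/
def lAct : A →L[ℂ] ↥I.car →L[ℂ] ↥I.car :=
  LinearMap.mkContinuous₂
    (LinearMap.mk₂ ℂ
      (fun a x => (⟨a * (x : A), I.mul_mem_left a x x.2⟩ : ↥I.car))
      (fun a b x => Subtype.ext <| by simp [add_mul])
      (fun c a x => Subtype.ext <| by simp [smul_mul_assoc])
      (fun a x y => Subtype.ext <| by simp [mul_add])
      (fun c a x => Subtype.ext <| by simp [mul_smul_comm]))
    1
    (fun a x => by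
      simp only [LinearMap.mk₂_apply, one_mul]
      calc ‖(⟨a * (x : A), I.mul_mem_left a x x.2⟩ : ↥I.car)‖ = ‖a * (x : A)‖ := rfl
        _ ≤ ‖a‖ * ‖(x : A)‖ := norm_mul_le _ _
        _ = ‖a‖ * ‖x‖ := by rw [Submodule.coe_norm])

/-- Right multiplication action of `A` on a closed two-sided ideal. -/
def rAct : A →L[ℂ] ↥I.car →L[ℂ] ↥I.car :=
  LinearMap.mkContinuous₂
    (LinearMap.mk₂ ℂ
      (fun a x => (⟨(x : A) * a, I.mul_mem_right a x x.2⟩ : ↥I.car))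
      (fun a b x => Subtype.ext <| by simp [mul_add])
      (fun c a x => Subtype.ext <| by simp [mul_smul_comm])
      (fun a x y => Subtype.ext <| by simp [add_mul])
      (fun c a x => Subtype.ext <| by simp [smul_mul_assoc]))
    1
    (fun a x => by
      simp only [LinearMap.mk₂_apply, one_mul]
      calc ‖(⟨(x : A) * a, I.mul_mem_right a x x.2⟩ : ↥I.car)‖ = ‖(x : A) * a‖ := rfl
        _ ≤ ‖(x : A)‖ * ‖a‖ := norm_mul_le _ _
        _ = ‖x‖ * ‖a‖ := by rw [Submodule.coe_norm]
        _ = ‖a‖ * ‖x‖ := mul_comm _ _)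

@[simp] lemma lAct_apply (a : A) (x : ↥I.car) : (I.lAct a x : A) = a * (x : A) := rfl
@[simp] lemma rAct_apply (a : A) (x : ↥I.car) : (I.rAct a x : A) = (x : A) * a := rfl

/-- A closed two-sided ideal as a Banach `A`-bimodule. -/
def toBMod : BMod A where
  X := ↥I.car
  act :=
    { l := I.lAct
      r := I.rAct
      l_mul := fun a b x => Subtype.ext <| by simp [mul_assoc]
      r_mul := fun a b x => Subtype.ext <| by simp [mul_assoc]
      lr := fun a b x => Subtype.ext <| by simp [mul_assoc] }

end ClosedIdeal

/-- The Banach algebra `A` as a Banach bimodule over itself. -/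
def regBMod (A : Type u) [NonUnitalNormedRing A] [NormedSpace ℂ A]
    [SMulCommClass ℂ A A] [IsScalarTower ℂ A A] : BMod A where
  X := A
  act :=
    { l := ContinuousLinearMap.mul ℂ A
      r := (ContinuousLinearMap.mul ℂ A).flip
      l_mul := fun a b x => by simp [mul_assoc]
      r_mul := fun a b x => by simp [mul_assoc]
      lr := fun a b x => by simp [mul_assoc] }

/-- `A` is `n`-`I`-weakly amenable: `H¹(A, I⁽ⁿ⁾) = {0}`. -/
def NIWeaklyAmenable (I : ClosedIdeal A) (n : ℕ) : Prop :=
  H1Zero (I.toBMod.iter n)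

/-- `A` is `n`-ideally amenable. -/
def NIdeallyAmenable (A : Type u) [NonUnitalNormedRing A] [NormedSpace ℂ A]
    [SMulCommClass ℂ A A] [IsScalarTower ℂ A A] (n : ℕ) : Prop :=
  ∀ I : ClosedIdeal A, H1Zero (I.toBMod.iter n)

/-- `A` is `n`-weakly amenable: `H¹(A, A⁽ⁿ⁾) = {0}`. -/
def NWeaklyAmenable (A : Type u) [NonUnitalNormedRing A] [NormedSpace ℂ A]
    [SMulCommClass ℂ A A] [IsScalarTower ℂ A A] (n : ℕ) : Prop :=
  H1Zero ((regBMod A).iter n)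

/- ## Arens-type extensions of bounded bilinear maps to biduals -/

section Arens

variable {E F G : Type*}
  [SeminormedAddCommGroup E] [NormedSpace ℂ E]
  [SeminormedAddCommGroup F] [NormedSpace ℂ F]
  [SeminormedAddCommGroup G] [NormedSpace ℂ G]

/-- Auxiliary map for the Arens extension:
`arT b Ψ g = (e ↦ Ψ (g ∘ b e))`. -/
def arT (b : E →L[ℂ] F →L[ℂ] G) (Ψ : Dl (Dl F)) (g : Dl G) : Dl E :=
  LinearMap.mkContinuous
    { toFun := fun e => Ψ (g.comp (b e))
      map_add' := fun e e' => by simp only [map_add, ContinuousLinearMap.comp_add, map_add]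
      map_smul' := fun c e => by
        simp only [map_smul, ContinuousLinearMap.comp_smul, map_smul, RingHom.id_apply] }
    (‖Ψ‖ * ‖g‖ * ‖b‖)
    (fun e => by
      calc ‖Ψ (g.comp (b e))‖ ≤ ‖Ψ‖ * ‖g.comp (b e)‖ := Ψ.le_opNorm _
        _ ≤ ‖Ψ‖ * (‖g‖ * ‖b e‖) := by gcongr; exact g.opNorm_comp_le _
        _ ≤ ‖Ψ‖ * (‖g‖ * (‖b‖ * ‖e‖)) := by gcongr; exact b.le_opNorm e
        _ = ‖Ψ‖ * ‖g‖ * ‖b‖ * ‖e‖ := by ring)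

@[simp] lemma arT_apply (b : E →L[ℂ] F →L[ℂ] G) (Ψ : Dl (Dl F)) (g : Dl G)
    (e : E) : arT b Ψ g e = Ψ (g.comp (b e)) := rfl

lemma arT_add_right (b : E →L[ℂ] F →L[ℂ] G) (Ψ Ψ' : Dl (Dl F)) (g : Dl G) :
    arT b (Ψ + Ψ') g = arT b Ψ g + arT b Ψ' g := by
  ext e; simp

lemma arT_smul_right (b : E →L[ℂ] F →L[ℂ] G) (c : ℂ) (Ψ : Dl (Dl F)) (g : Dl G) :
    arT b (c • Ψ) g = c • arT b Ψ g := by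
  ext e; simp

lemma arT_add_g (b : E →L[ℂ] F →L[ℂ] G) (Ψ : Dl (Dl F)) (g g' : Dl G) :
    arT b Ψ (g + g') = arT b Ψ g + arT b Ψ g' := by
  ext e; simp [ContinuousLinearMap.add_comp]

lemma arT_smul_g (b : E →L[ℂ] F →L[ℂ] G) (c : ℂ) (Ψ : Dl (Dl F)) (g : Dl G) :
    arT b Ψ (c • g) = c • arT b Ψ g := by
  ext e; simp [ContinuousLinearMap.smul_comp]

/-- One half of the Arens extension: `(arExtFun b Φ Ψ) g = Φ (e ↦ Ψ (g ∘ b e))`. -/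
def arExtFun (b : E →L[ℂ] F →L[ℂ] G) (Φ : Dl (Dl E)) (Ψ : Dl (Dl F)) :
    Dl (Dl G) :=
  LinearMap.mkContinuous
    { toFun := fun g => Φ (arT b Ψ g)
      map_add' := fun g g' => by simp only [arT_add_g, map_add]
      map_smul' := fun c g => by simp only [arT_smul_g, map_smul, RingHom.id_apply] }
    (‖Φ‖ * ‖Ψ‖ * ‖b‖)
    (fun g => by
      calc ‖Φ (arT b Ψ g)‖ ≤ ‖Φ‖ * ‖arT b Ψ g‖ := Φ.le_opNorm _
        _ ≤ ‖Φ‖ * (‖Ψ‖ * ‖g‖ * ‖b‖) := by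
            gcongr
            exact LinearMap.mkContinuous_norm_le _ (by positivity) _
        _ = ‖Φ‖ * ‖Ψ‖ * ‖b‖ * ‖g‖ := by ring)

@[simp] lemma arExtFun_apply (b : E →L[ℂ] F →L[ℂ] G) (Φ : Dl (Dl E))
    (Ψ : Dl (Dl F)) (g : Dl G) : arExtFun b Φ Ψ g = Φ (arT b Ψ g) := rfl

lemma arExtFun_norm_le (b : E →L[ℂ] F →L[ℂ] G) (Φ : Dl (Dl E))
    (Ψ : Dl (Dl F)) : ‖arExtFun b Φ Ψ‖ ≤ ‖Φ‖ * ‖Ψ‖ * ‖b‖ :=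
  LinearMap.mkContinuous_norm_le _ (by positivity) _

/-- The (first-)Arens-type extension of a bounded bilinear map `b : E × F → G` to the
biduals, obtained by iterated weak* limits (outer limit in the first variable):
`(arExt b Φ Ψ) g = Φ (e ↦ Ψ (g ∘ b e))`. -/
def arExt (b : E →L[ℂ] F →L[ℂ] G) :
    Dl (Dl E) →L[ℂ] Dl (Dl F) →L[ℂ] Dl (Dl G) :=
  LinearMap.mkContinuous₂
    (LinearMap.mk₂ ℂ (arExtFun b)
      (fun Φ Φ' Ψ => by ext g; simp)
      (fun c Φ Ψ => by ext g; simp)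
      (fun Φ Ψ Ψ' => by ext g; simp [arT_add_right])
      (fun c Φ Ψ => by ext g; simp [arT_smul_right]))
    ‖b‖
    (fun Φ Ψ => by
      simp only [LinearMap.mk₂_apply]
      exact (arExtFun_norm_le b Φ Ψ).trans (le_of_eq (by ring)))

@[simp] lemma arExt_apply (b : E →L[ℂ] F →L[ℂ] G) (Φ : Dl (Dl E))
    (Ψ : Dl (Dl F)) (g : Dl G) : arExt b Φ Ψ g = Φ (arT b Ψ g) := rfl

end Arens

/- ## Arens products and Arens module extensions -/

/-- The first Arens product on the bidual of a Banach algebra. -/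
def arensMul (A : Type u) [NonUnitalNormedRing A] [NormedSpace ℂ A]
    [SMulCommClass ℂ A A] [IsScalarTower ℂ A A] :
    Dl (Dl A) →L[ℂ] Dl (Dl A) →L[ℂ] Dl (Dl A) :=
  arExt (ContinuousLinearMap.mul ℂ A)

/-- The second Arens product on the bidual of a Banach algebra. -/
def arensMul₂ (A : Type u) [NonUnitalNormedRing A] [NormedSpace ℂ A]
    [SMulCommClass ℂ A A] [IsScalarTower ℂ A A]
    (F G : Dl (Dl A)) : Dl (Dl A) :=
  arExt (ContinuousLinearMap.mul ℂ A).flip G F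

namespace Bimodule

variable {X : Type u} [NormedAddCommGroup X] [NormedSpace ℂ X]

/-- First (iterated weak*-limit) extension of the left action:
`a'' · x'' = w*-lim_i lim_j a_i • x_j`. -/
def lExt (M : Bimodule A X) (F : Dl (Dl A)) (ξ : Dl (Dl X)) :
    Dl (Dl X) :=
  arExt M.l F ξ

/-- Second extension of the left action: `a'' · x'' = w*-lim_j lim_i a_i • x_j`. -/
def lExt₂ (M : Bimodule A X) (F : Dl (Dl A)) (ξ : Dl (Dl X)) :
    Dl (Dl X) :=
  arExt M.l.flip ξ F

/-- First (iterated weak*-limit) extension of the right action: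
`x'' · a'' = w*-lim_j lim_i x_j • a_i`. -/
def rExt (M : Bimodule A X) (ξ : Dl (Dl X)) (F : Dl (Dl A)) :
    Dl (Dl X) :=
  arExt M.r.flip ξ F

/-- Second extension of the right action: `x'' · a'' = w*-lim_i lim_j x_j • a_i`. -/
def rExt₂ (M : Bimodule A X) (ξ : Dl (Dl X)) (F : Dl (Dl A)) :
    Dl (Dl X) :=
  arExt M.r F ξ

/-- The topological centre of the right module action of `A` on `X`, i.e. the set of
`x'' ∈ X**` such that `a'' ↦ x'' · a''` is weak*-weak* continuous. -/
def rTopCenter (M : Bimodule A X) : Set (Dl (Dl X)) :=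
  {ξ | Continuous fun F : WeakDual ℂ (Dl A) => (M.rExt ξ F : WeakDual ℂ (Dl X))}

end Bimodule

/-- The topological centre of the bidual of a Banach algebra (with the first
Arens product): the set of `F ∈ A**` for which `G ↦ F □ G` is weak*-weak* continuous. -/
def arensTopCenter (A : Type u) [NonUnitalNormedRing A] [NormedSpace ℂ A]
    [SMulCommClass ℂ A A] [IsScalarTower ℂ A A] : Set (Dl (Dl A)) :=
  {F | Continuous fun G : WeakDual ℂ (Dl A) => (arensMul A F G : WeakDual ℂ (Dl A))}

/- ## Adjoint maps -/

section DMap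

variable {E F : Type*} [SeminormedAddCommGroup E] [NormedSpace ℂ E]
  [SeminormedAddCommGroup F] [NormedSpace ℂ F]

/-- The adjoint (dual map) of a bounded operator. -/
def dMap (f : E →L[ℂ] F) : Dl F →L[ℂ] Dl E :=
  (ContinuousLinearMap.compL ℂ E F ℂ).flip f

@[simp] lemma dMap_apply (f : E →L[ℂ] F) (g : Dl F) : dMap f g = g.comp f := rfl

/-- The canonical projection `X⁽⁴⁾ → X⁽²⁾`, i.e. the adjoint of the canonical
embedding `X* → X***`. -/
def Pmap (X : Type u) [SeminormedAddCommGroup X] [NormedSpace ℂ X] :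
    Dl (Dl (Dl (Dl X))) →L[ℂ] Dl (Dl X) :=
  dMap (inclDD (Dl X))

end DMap

/-! A retract of a bimodule with vanishing first cohomology again has vanishing first cohomology:
push a derivation into the larger module, where it is implemented by some `ξ`, and project `ξ` back.
For any bimodule `X`, the dual `X*` is a retract of `X***`: the embedding `X* → X***` is split by
the adjoint of `X → X**`, which restricts functionals on `X**` to `X`. -/

namespace Bimodule

variable {X Y : Type u} [NormedAddCommGroup X] [NormedSpace ℂ X]
  [NormedAddCommGroup Y] [NormedSpace ℂ Y]

/-- A bounded operator `φ` between Banach `A`-bimodules is a bimodule homomorphism. It is a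
predicate on operators so that it applies to the existing maps `inclDD` and `dMap`. -/
structure IsHom (M : Bimodule A X) (N : Bimodule A Y) (φ : X →L[ℂ] Y) : Prop where
  map_l : ∀ a x, φ (M.l a x) = N.l a (φ x)
  map_r : ∀ a x, φ (M.r a x) = N.r a (φ x)

lemma isHom_inclDD (M : Bimodule A X) : M.IsHom M.dualMod.dualMod (inclDD X) where
  map_l a x := by ext f; simp
  map_r a x := by ext f; simp

lemma IsHom.dMap {M : Bimodule A X} {N : Bimodule A Y} {φ : X →L[ℂ] Y} (hφ : M.IsHom N φ) :
    N.dualMod.IsHom M.dualMod (dMap φ) where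
  map_l a f := by ext x; simp [hφ.map_r]
  map_r a f := by ext x; simp [hφ.map_l]

end Bimodule

lemma leftInverse_dMap_inclDD (X : Type u) [SeminormedAddCommGroup X] [NormedSpace ℂ X] :
    Function.LeftInverse (dMap (inclDD X)) (inclDD (Dl X)) :=
  fun _ => rfl

section Retract

variable {M N : BMod A} {D : A →L[ℂ] M.X} {φ : M.X →L[ℂ] N.X}

lemma IsDerivation.map (hD : IsDerivation M D) (hφ : M.act.IsHom N.act φ) :
    IsDerivation N (φ ∘L D) := fun a b => by
  simp only [comp_apply, hD a b, map_add, hφ.map_l, hφ.map_r]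

lemma IsInner.map (hD : IsInner M D) (hφ : M.act.IsHom N.act φ) : IsInner N (φ ∘L D) := by
  obtain ⟨x, hx⟩ := hD
  exact ⟨φ x, fun a => by simp only [comp_apply, hx a, map_sub, hφ.map_l, hφ.map_r]⟩

lemma H1Zero.of_leftInverse {ψ : N.X →L[ℂ] M.X} (hN : H1Zero N) (hφ : M.act.IsHom N.act φ)
    (hψ : N.act.IsHom M.act ψ) (hψφ : Function.LeftInverse ψ φ) : H1Zero M := by
  intro D hD
  have hinner : IsInner M (ψ ∘L φ ∘L D) := (hN _ (hD.map hφ)).map hψ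
  have hcomp : ψ ∘L φ ∘L D = D := ContinuousLinearMap.ext fun a => hψφ (D a)
  rwa [hcomp] at hinner

end Retract

lemma H1Zero.dualObj_of_tripleDual {M : BMod A} (h : H1Zero M.dualObj.dualObj.dualObj) :
    H1Zero M.dualObj :=
  h.of_leftInverse M.act.dualMod.isHom_inclDD M.act.isHom_inclDD.dMap
    (leftInverse_dMap_inclDD M.X)

theorem nIWeaklyAmenable_of_add_two_general (M : BMod A) (n : ℕ) (hn : 1 ≤ n)
    (h : H1Zero (M.iter (n + 2))) : H1Zero (M.iter n) := by
  obtain ⟨m, rfl⟩ := Nat.exists_eq_add_of_le' hn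
  exact H1Zero.dualObj_of_tripleDual h

/-- **Theorem 1.5.** If `A` is `(n+2)-I`-weakly amenable then `A` is
`n-I`-weakly amenable. -/
theorem nIWeaklyAmenable_of_add_two
    {A : Type u} [NonUnitalNormedRing A] [NormedSpace ℂ A]
    [SMulCommClass ℂ A A] [IsScalarTower ℂ A A] [CompleteSpace A]
    (I : ClosedIdeal A) (n : ℕ) (hn : 1 ≤ n)
    (h : H1Zero (I.toBMod.iter (n + 2))) :
    H1Zero (I.toBMod.iter n) :=
  nIWeaklyAmenable_of_add_two_general I.toBMod n hn h
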